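/- Let ρ be a density operator on ℂ^d with eigenvalue vector r, let λ be a partition of k with at most d parts, and let P_λ be the projection onto the λ-isotypic component of (ℂ^d)^{⊗k} under the Schur–Weyl decomposition. Then tr(P_λ ρ^{⊗k}) ≤ (k+1)^{d(d−1)/2} exp(−k D(λ̄ || r)), where λ̄ = λ/k and D is the Kullback-Leibler divergence. -/

import Mathlib

open Matrix Finset Nat ComplexOrder

noncomputable section

/-- The cells of the Young diagram of `lam` (rows indexed `0, …, d−1`). -/
def youngCells (d k : ℕ) (lam : ℕ → ℕ) : Finset (ℕ × ℕ) :=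
  (range d ×ˢ range k).filter fun c => c.2 < lam c.1

/-- The matrix of the action of the permutation `π ∈ S_k` on `(ℂ^d)^{⊗k}`, permuting
the tensor factors: basis vectors are indexed by functions `Fin k → Fin d`. -/
def permMat (d k : ℕ) (π : Equiv.Perm (Fin k)) :
    Matrix (Fin k → Fin d) (Fin k → Fin d) ℂ :=
  Matrix.of fun v w => if v = w ∘ ⇑π⁻¹ then 1 else 0

/-- The Young symmetry operator `e(T)` of a tableau, acting on `(ℂ^d)^{⊗k}`:
the signed sum over the column group times the sum over the row group, where the tableau is
given as a numbering `t : Fin k → ℕ × ℕ` of the boxes. -/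
def youngSymMat (d k : ℕ) (t : Fin k → ℕ × ℕ) :
    Matrix (Fin k → Fin d) (Fin k → Fin d) ℂ :=
  (∑ π ∈ univ.filter (fun π : Equiv.Perm (Fin k) => ∀ j, (t (π j)).2 = (t j).2),
      (((Equiv.Perm.sign π : ℤ) : ℂ) • permMat d k π)) *
    ∑ π ∈ univ.filter (fun π : Equiv.Perm (Fin k) => ∀ j, (t (π j)).1 = (t j).1),
      permMat d k π

/-- The `lam`-isotypic component `U_lam ⊗ V_lam` of `(ℂ^d)^{⊗k}` in the Schur–Weyl
decomposition: the span of the `S_k`-translates of the images of the Young symmetry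
operators of tableaux of shape `lam`. -/
def isotypic (d k : ℕ) (lam : ℕ → ℕ) : Submodule ℂ ((Fin k → Fin d) → ℂ) :=
  Submodule.span ℂ {x | ∃ t : Fin k → ℕ × ℕ,
    Set.BijOn t Set.univ ↑(youngCells d k lam) ∧
    ∃ (π : Equiv.Perm (Fin k)) (v : (Fin k → Fin d) → ℂ),
      x = (permMat d k π).mulVec ((youngSymMat d k t).mulVec v)}

/-- The `k`-fold tensor power `ρ^{⊗k}` of a matrix `ρ` on `ℂ^d`. -/
def tensorPow (d k : ℕ) (ρ : Matrix (Fin d) (Fin d) ℂ) :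
    Matrix (Fin k → Fin d) (Fin k → Fin d) ℂ :=
  Matrix.of fun v w => ∏ j, ρ (v j) (w j)

/-! ### Basic operators -/

abbrev Ix (d k : ℕ) := Fin k → Fin d

lemma permMat_mulVec {d k : ℕ} (π : Equiv.Perm (Fin k)) (u : Ix d k → ℂ) (v : Ix d k) :
    (permMat d k π *ᵥ u) v = u (v ∘ π) := by
  unfold permMat
  simp only [mulVec, dotProduct, Matrix.of_apply, ite_mul, one_mul, zero_mul]
  rw [Finset.sum_eq_single (v ∘ π)]
  · rw [if_pos]
    ext j; simp
  · intro b _ hb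
    rw [if_neg]
    rintro rfl
    apply hb
    ext j; simp
  · simp

lemma permMat_conjTranspose {d k : ℕ} (π : Equiv.Perm (Fin k)) :
    (permMat d k π)ᴴ = permMat d k π⁻¹ := by
  ext v w
  simp only [permMat, conjTranspose_apply, Matrix.of_apply, inv_inv]
  have : (w = v ∘ ⇑π⁻¹) ↔ (v = w ∘ π) := by
    constructor
    · rintro rfl; ext j; simp
    · rintro rfl; ext j; simp
  by_cases h : v = w ∘ π
  · rw [if_pos h, if_pos (this.2 h)]; simp
  · rw [if_neg h, if_neg (fun h' => h (this.1 h'))]; simp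

lemma permMat_mul {d k : ℕ} (π τ : Equiv.Perm (Fin k)) :
    permMat d k π * permMat d k τ = permMat d k (π * τ) := by
  apply Matrix.toLin'.injective
  apply LinearMap.ext
  intro u
  ext v
  simp [Matrix.toLin'_apply, permMat_mulVec, Function.comp_assoc]

lemma tensorPow_mul {d k : ℕ} (g h : Matrix (Fin d) (Fin d) ℂ) :
    tensorPow d k (g * h) = tensorPow d k g * tensorPow d k h := by
  ext v w
  simp only [tensorPow, Matrix.of_apply, Matrix.mul_apply]
  rw [Finset.prod_univ_sum]
  simp [Finset.prod_mul_distrib]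

lemma tensorPow_one {d k : ℕ} : tensorPow d k 1 = 1 := by
  ext v w
  simp only [tensorPow, Matrix.of_apply, Matrix.one_apply]
  rw [Finset.prod_ite_zero]
  simp [funext_iff]

lemma tensorPow_conjTranspose {d k : ℕ} (g : Matrix (Fin d) (Fin d) ℂ) :
    (tensorPow d k g)ᴴ = tensorPow d k gᴴ := by
  ext v w
  simp [tensorPow]

lemma tensorPow_permMat {d k : ℕ} (g : Matrix (Fin d) (Fin d) ℂ) (π : Equiv.Perm (Fin k)) :
    tensorPow d k g * permMat d k π = permMat d k π * tensorPow d k g := by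
  apply Matrix.toLin'.injective
  apply LinearMap.ext
  intro u
  ext v
  simp only [Matrix.toLin'_apply, ← Matrix.mulVec_mulVec, permMat_mulVec]
  simp only [mulVec, dotProduct]
  rw [← Equiv.sum_comp (Equiv.arrowCongr π (Equiv.refl (Fin d)))]
  refine Finset.sum_congr rfl fun w _ => ?_
  rw [show (∑ x, permMat d k π ((π.arrowCongr (Equiv.refl (Fin d))) w) x * u x)
    = (permMat d k π *ᵥ u) ((π.arrowCongr (Equiv.refl (Fin d))) w) from rfl, permMat_mulVec]
  congr 1
  · simp only [tensorPow, Matrix.of_apply]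
    rw [← Equiv.prod_comp π]
    simp [Equiv.arrowCongr]
  · congr 1
    ext j
    simp [Equiv.arrowCongr]

lemma star_dot_mulVec {I : Type*} [Fintype I] (M : Matrix I I ℂ) (z u : I → ℂ) :
    star z ⬝ᵥ (M *ᵥ u) = star (Mᴴ *ᵥ z) ⬝ᵥ u := by
  rw [Matrix.star_mulVec, Matrix.conjTranspose_conjTranspose, Matrix.dotProduct_mulVec]

lemma tensorPow_young {d k : ℕ} (g : Matrix (Fin d) (Fin d) ℂ) (t : Fin k → ℕ × ℕ) :
    tensorPow d k g * youngSymMat d k t = youngSymMat d k t * tensorPow d k g := by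
  unfold youngSymMat
  have h : ∀ π, Commute (tensorPow d k g) (permMat d k π) := fun π => tensorPow_permMat g π
  have : Commute (tensorPow d k g) ((∑ π ∈ univ.filter (fun π : Equiv.Perm (Fin k) =>
      ∀ j, (t (π j)).2 = (t j).2), (((Equiv.Perm.sign π : ℤ) : ℂ) • permMat d k π)) *
    ∑ π ∈ univ.filter (fun π : Equiv.Perm (Fin k) => ∀ j, (t (π j)).1 = (t j).1),
      permMat d k π) :=
    Commute.mul_right (Commute.sum_right _ _ _ fun π _ => (h π).smul_right _)
      (Commute.sum_right _ _ _ fun π _ => h π)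
  exact this

lemma isotypic_tensorPow {d k : ℕ} {lam : ℕ → ℕ} (g : Matrix (Fin d) (Fin d) ℂ)
    {w : Ix d k → ℂ} (hw : w ∈ isotypic d k lam) : tensorPow d k g *ᵥ w ∈ isotypic d k lam := by
  unfold isotypic at hw ⊢
  induction hw using Submodule.span_induction with
  | mem x hx =>
    obtain ⟨t, ht, π, v, rfl⟩ := hx
    apply Submodule.subset_span
    refine ⟨t, ht, π, tensorPow d k g *ᵥ v, ?_⟩
    simp only [Matrix.mulVec_mulVec]
    rw [← Matrix.mul_assoc, tensorPow_permMat, Matrix.mul_assoc, tensorPow_young]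
  | zero => simp
  | add x y _ _ hx hy => rw [Matrix.mulVec_add]; exact Submodule.add_mem _ hx hy
  | smul c x _ hx => rw [Matrix.mulVec_smul]; exact Submodule.smul_mem _ _ hx

lemma isotypic_permMat {d k : ℕ} {lam : ℕ → ℕ} (τ : Equiv.Perm (Fin k))
    {w : Ix d k → ℂ} (hw : w ∈ isotypic d k lam) : permMat d k τ *ᵥ w ∈ isotypic d k lam := by
  unfold isotypic at hw ⊢
  induction hw using Submodule.span_induction with
  | mem x hx =>
    obtain ⟨t, ht, π, v, rfl⟩ := hx
    apply Submodule.subset_span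
    refine ⟨t, ht, τ * π, v, ?_⟩
    rw [← permMat_mul]
    simp only [Matrix.mulVec_mulVec, Matrix.mul_assoc]
  | zero => simp
  | add x y _ _ hx hy => rw [Matrix.mulVec_add]; exact Submodule.add_mem _ hx hy
  | smul c x _ hx => rw [Matrix.mulVec_smul]; exact Submodule.smul_mem _ _ hx

lemma proj_commute {I : Type*} [Fintype I] [DecidableEq I] (P : Matrix I I ℂ)
    (hPidem : P * P = P) (hPherm : P.IsHermitian) (M : Matrix I I ℂ)
    (h1 : ∀ w ∈ LinearMap.range P.mulVecLin, M *ᵥ w ∈ LinearMap.range P.mulVecLin)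
    (h2 : ∀ w ∈ LinearMap.range P.mulVecLin, Mᴴ *ᵥ w ∈ LinearMap.range P.mulVecLin) :
    P * M = M * P := by
  have key : ∀ N : Matrix I I ℂ,
      (∀ w ∈ LinearMap.range P.mulVecLin, N *ᵥ w ∈ LinearMap.range P.mulVecLin) →
      P * N * P = N * P := by
    intro N hN
    apply Matrix.toLin'.injective
    apply LinearMap.ext
    intro u
    obtain ⟨y, hy⟩ := hN (P *ᵥ u) ⟨u, rfl⟩
    simp only [Matrix.mulVecLin_apply] at hy
    simp only [Matrix.toLin'_apply, ← Matrix.mulVec_mulVec]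
    rw [← hy, Matrix.mulVec_mulVec, hPidem]
  have a := key M h1
  have b := congrArg conjTranspose (key Mᴴ h2)
  simp only [Matrix.conjTranspose_mul, conjTranspose_conjTranspose, hPherm.eq] at b
  rw [← b, ← Matrix.mul_assoc, a]

/-! ### Dominance -/

lemma card_lt_eq_sum {k : ℕ} (f : Fin k → ℕ) (i : ℕ) :
    #{j | f j < i} = ∑ a ∈ range i, #{j | f j = a} := by
  rw [Finset.card_eq_sum_card_fiberwise (f := f) (t := range i)]
  · refine Finset.sum_congr rfl fun a ha => ?_
    congr 1
    ext j
    simp only [Finset.mem_filter, Finset.mem_univ, true_and, and_iff_right_iff_imp]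
    rintro rfl
    simpa using ha
  · intro j hj
    simpa using hj

lemma card_row {d k : ℕ} {lam : ℕ → ℕ} (hsupp : ∀ i, d ≤ i → lam i = 0)
    (hsum : ∑ i ∈ range d, lam i = k) {t : Fin k → ℕ × ℕ}
    (ht : Set.BijOn t Set.univ ↑(youngCells d k lam)) (a : ℕ) :
    #{j | (t j).1 = a} = lam a := by
  have hlek : lam a ≤ k := by
    by_cases h : a < d
    · rw [← hsum]
      exact Finset.single_le_sum (f := lam) (fun i _ => Nat.zero_le _) (by simpa using h)
    · rw [hsupp a (by omega)]; omega
  conv_rhs => rw [← Finset.card_range (lam a)]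
  apply Finset.card_bij (fun j _ => (t j).2)
  · intro j hj
    have h1 := ht.mapsTo (Set.mem_univ j)
    simp only [youngCells, Finset.coe_filter, Set.mem_ofPred_eq] at h1
    simp only [Finset.mem_filter, Finset.mem_univ, true_and] at hj
    rw [hj] at h1
    simpa using h1.2
  · intro j hj j' hj' h
    simp only [Finset.mem_filter, Finset.mem_univ, true_and] at hj hj'
    apply ht.injOn (Set.mem_univ _) (Set.mem_univ _)
    exact Prod.ext (hj.trans hj'.symm) h
  · intro c hc
    simp only [Finset.mem_range] at hc
    have hm : ((a, c) : ℕ × ℕ) ∈ (↑(youngCells d k lam) : Set (ℕ × ℕ)) := by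
      simp only [youngCells, Finset.coe_filter, Set.mem_ofPred_eq, Finset.mem_product,
        Finset.mem_range]
      refine ⟨⟨?_, by omega⟩, hc⟩
      by_contra h
      rw [hsupp a (by omega)] at hc
      omega
    obtain ⟨j, _, hj⟩ := ht.surjOn hm
    exact ⟨j, by simp [hj], by simp [hj]⟩

lemma colInj_card_le {d k : ℕ} {lam : ℕ → ℕ} (hanti : Antitone lam)
    {t : Fin k → ℕ × ℕ}
    (ht : Set.BijOn t Set.univ ↑(youngCells d k lam)) (y : Fin k → ℕ)
    (hy : ∀ p q, p ≠ q → (t p).2 = (t q).2 → y p ≠ y q) (i : ℕ) :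
    #{j | y j < i} ≤ #{j | (t j).1 < i} := by
  have hmem : ∀ j, (t j).1 < d ∧ (t j).2 < k ∧ (t j).2 < lam (t j).1 := by
    intro j
    have h1 := ht.mapsTo (Set.mem_univ j)
    simpa [youngCells, and_assoc] using h1
  have hS : ∀ s : Finset (Fin k), (s : Set (Fin k)).MapsTo (fun j => (t j).2) (range k) := by
    intro s j _
    simpa using (hmem j).2.1
  rw [Finset.card_eq_sum_card_fiberwise (hS _), Finset.card_eq_sum_card_fiberwise (hS _)]
  refine Finset.sum_le_sum fun c _ => ?_
  by_cases hfull : ∀ j, (t j).2 = c → (t j).1 < i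
  · apply Finset.card_le_card
    intro j
    simp only [Finset.mem_filter, Finset.mem_univ, true_and]
    rintro ⟨_, h⟩
    exact ⟨hfull j h, h⟩
  · push Not at hfull
    obtain ⟨j0, hj0, hi⟩ := hfull
    have hle : #{j ∈ ({j | y j < i} : Finset (Fin k)) | (t j).2 = c} ≤ i := by
      conv_rhs => rw [← Finset.card_range i]
      apply Finset.card_le_card_of_injOn y
      · intro j hj
        simp only [Finset.coe_filter, Finset.mem_filter, Finset.mem_univ, true_and,
          Set.mem_ofPred_eq] at hj
        simpa using hj.1
      · intro p hp q hq hpq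
        simp only [Finset.coe_filter, Finset.mem_filter, Finset.mem_univ, true_and,
          Set.mem_ofPred_eq] at hp hq
        by_contra hne
        exact hy p q hne (hp.2.trans hq.2.symm) hpq
    refine hle.trans ?_
    conv_lhs => rw [← Finset.card_range i]
    apply Finset.card_le_card_of_surjOn (fun j => (t j).1)
    intro a ha
    simp only [Finset.coe_range, Set.mem_Iio] at ha
    have hm : ((a, c) : ℕ × ℕ) ∈ (↑(youngCells d k lam) : Set (ℕ × ℕ)) := by
      have h1 := hmem j0
      have h2 := hanti (show a ≤ (t j0).1 by omega)
      simp only [youngCells, Finset.coe_filter, Set.mem_ofPred_eq, Finset.mem_product,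
        Finset.mem_range]
      omega
    obtain ⟨j, _, hj⟩ := ht.surjOn hm
    refine ⟨j, ?_, by simp [hj]⟩
    simp [hj, ha]

lemma antisym_vanish {d k : ℕ} (t : Fin k → ℕ × ℕ) (u : Ix d k → ℂ) (y : Ix d k)
    {p q : Fin k} (hpq : p ≠ q) (hc : (t p).2 = (t q).2) (hy : y p = y q) :
    ((∑ π ∈ univ.filter (fun π : Equiv.Perm (Fin k) => ∀ j, (t (π j)).2 = (t j).2),
      (((Equiv.Perm.sign π : ℤ) : ℂ) • permMat d k π)) *ᵥ u) y = 0 := by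
  rw [Matrix.sum_mulVec, Finset.sum_apply]
  have hsw : ∀ j, (t (Equiv.swap p q j)).2 = (t j).2 := by
    intro j
    by_cases h1 : j = p
    · subst h1; simp [hc]
    by_cases h2 : j = q
    · subst h2; simp [hc]
    rw [Equiv.swap_apply_of_ne_of_ne h1 h2]
  have hysw : y ∘ Equiv.swap p q = y := by
    ext j
    simp only [Function.comp_apply]
    by_cases h1 : j = p
    · subst h1; simp [hy]
    by_cases h2 : j = q
    · subst h2; simp [hy]
    rw [Equiv.swap_apply_of_ne_of_ne h1 h2]
  apply Finset.sum_involution (fun π _ => Equiv.swap p q * π)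
  · intro π _
    simp only [Matrix.smul_mulVec, Pi.smul_apply, permMat_mulVec, smul_eq_mul]
    rw [Equiv.Perm.sign_mul, Equiv.Perm.sign_swap hpq, Equiv.Perm.coe_mul, ← Function.comp_assoc,
      hysw]
    simp
  · intro π _ _ h
    have : Equiv.swap p q = 1 := by simpa using h
    exact hpq (Equiv.swap_eq_one_iff.1 this)
  · intro π hπ
    simp only [Finset.mem_filter, Finset.mem_univ, true_and] at hπ ⊢
    intro j
    rw [Equiv.Perm.mul_apply, hsw, hπ]
  · intro π _
    simp [← mul_assoc]

lemma isotypic_dom {d k : ℕ} {lam : ℕ → ℕ} (hanti : Antitone lam)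
    (hsupp : ∀ i, d ≤ i → lam i = 0)
    (hsum : ∑ i ∈ range d, lam i = k) {w : Ix d k → ℂ} (hw : w ∈ isotypic d k lam)
    (y : Ix d k) (hy : w y ≠ 0) (i : ℕ) :
    #{j | (y j : ℕ) < i} ≤ ∑ a ∈ range i, lam a := by
  by_contra hcon
  apply hy
  clear hy
  unfold isotypic at hw
  induction hw using Submodule.span_induction with
  | mem x hx =>
    obtain ⟨t, ht, π, v, rfl⟩ := hx
    rw [permMat_mulVec]
    unfold youngSymMat
    rw [← Matrix.mulVec_mulVec]
    by_cases h : ∀ p q, p ≠ q → (t p).2 = (t q).2 → ((y ∘ π) p : ℕ) ≠ ((y ∘ π) q : ℕ)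
    · exfalso
      apply hcon
      have h1 := colInj_card_le hanti ht (fun j => ((y ∘ π) j : ℕ)) h i
      rw [card_lt_eq_sum (fun j => (t j).1)] at h1
      simp only [card_row hsupp hsum ht] at h1
      refine le_trans (le_of_eq ?_) h1
      apply Finset.card_bij (fun j _ => π⁻¹ j)
      · intro j hj
        simpa using hj
      · intro a _ b _ hab
        simpa using hab
      · intro b hb
        refine ⟨π b, by simpa using hb, by simp⟩
    · push Not at h
      obtain ⟨p, q, hpq, hc, he⟩ := h
      exact antisym_vanish t _ _ hpq hc (Fin.ext he)
  | zero => rfl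
  | add x y _ _ hx hy => simp [hx, hy]
  | smul c x _ hx => simp [hx]

/-- `x` has content `lam`. -/
def IsLam {d k : ℕ} (lam : ℕ → ℕ) (x : Ix d k) : Prop := ∀ a : Fin d, #{j | x j = a} = lam a

lemma isLam_card_lt {d k : ℕ} {lam : ℕ → ℕ} (hsupp : ∀ i, d ≤ i → lam i = 0)
    {x : Ix d k} (hx : IsLam lam x) (i : ℕ) :
    #{j | (x j : ℕ) < i} = ∑ a ∈ range i, lam a := by
  rw [card_lt_eq_sum]
  refine Finset.sum_congr rfl fun a _ => ?_
  by_cases h : a < d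
  · rw [← hx ⟨a, h⟩]
    congr 1
    ext j
    simp [Fin.ext_iff]
  · rw [hsupp a (by omega)]
    rw [Finset.card_eq_zero, Finset.filter_eq_empty_iff]
    intro j _
    have := (x j).2
    omega

lemma eq_of_le_of_dom {d k : ℕ} {x y : Ix d k} (hle : ∀ j, y j ≤ x j)
    (hdom : ∀ i, #{j | (y j : ℕ) < i} ≤ #{j | (x j : ℕ) < i}) : y = x := by
  funext j
  apply le_antisymm (hle j)
  by_contra hlt
  have h : (({l | (x l : ℕ) < (x j : ℕ)} : Finset (Fin k)) : Finset (Fin k))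
      = ({l | (y l : ℕ) < (x j : ℕ)} : Finset (Fin k)) := by
    apply Finset.eq_of_subset_of_card_le _ (hdom _)
    intro l
    simp only [Finset.mem_filter, Finset.mem_univ, true_and]
    have := hle l
    intro h
    exact lt_of_le_of_lt (by exact_mod_cast this) h
  have : j ∈ ({l | (y l : ℕ) < x j} : Finset (Fin k)) := by
    simp only [Finset.mem_filter, Finset.mem_univ, true_and]
    omega
  rw [← h] at this
  simp at this

lemma prod_le_of_dom {d k : ℕ} (r : Fin d → ℝ) (hr : Antitone r) (hr0 : ∀ i, 0 ≤ r i)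
    {x y : Ix d k} (hdom : ∀ i, #{j | (y j : ℕ) < i} ≤ #{j | (x j : ℕ) < i}) :
    ∏ j, r (y j) ≤ ∏ j, r (x j) := by
  rw [← Equiv.prod_comp (Tuple.sort y), ← Equiv.prod_comp (Tuple.sort x) (fun j => r (x j))]
  refine Finset.prod_le_prod (fun _ _ => hr0 _) fun j _ => hr ?_
  by_contra hlt
  push Not at hlt
  set i : ℕ := (x (Tuple.sort x j)).val with hi
  have hx := Tuple.monotone_sort x
  have hy := Tuple.monotone_sort y
  have hc : ∀ u : Ix d k, #{l | (u l : ℕ) < i} = #{l | (u (Tuple.sort u l) : ℕ) < i} := by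
    intro u
    symm
    apply Finset.card_bij (fun l _ => Tuple.sort u l)
    · intro l hl; simpa using hl
    · intro _ _ _ _ hab; simpa using hab
    · intro b hb
      exact ⟨(Tuple.sort u).symm b, by simpa using hb, by simp⟩
  have h := hdom i
  rw [hc x, hc y] at h
  have h1 : #(Finset.Iic j) ≤ #{l | (y (Tuple.sort y l) : ℕ) < i} := by
    apply Finset.card_le_card
    intro l hl
    simp only [Finset.mem_Iic] at hl
    simp only [Finset.mem_filter, Finset.mem_univ, true_and]
    have := hy hl
    simp only [Function.comp_apply] at this
    have h3 := lt_of_le_of_lt this hlt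
    exact h3
  have h2 : #{l | (x (Tuple.sort x l) : ℕ) < i} ≤ #(Finset.Iio j) := by
    apply Finset.card_le_card
    intro l hl
    simp only [Finset.mem_filter, Finset.mem_univ, true_and] at hl
    simp only [Finset.mem_Iio]
    by_contra hcon
    have := hx (not_lt.1 hcon)
    simp only [Function.comp_apply] at this
    have h3 : i ≤ (x (Tuple.sort x l) : ℕ) := this
    omega
  simp only [Fin.card_Iic, Fin.card_Iio] at h1 h2
  omega

/-! ### Generation by weight `lam` vectors -/

/-- Lower unipotent matrices. -/
def LowUni {d : ℕ} (n : Matrix (Fin d) (Fin d) ℂ) : Prop :=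
  (∀ a b, a < b → n a b = 0) ∧ ∀ a, n a a = 1

lemma LowUni.one {d : ℕ} : LowUni (1 : Matrix (Fin d) (Fin d) ℂ) :=
  ⟨fun a b h => Matrix.one_apply_ne h.ne, fun a => Matrix.one_apply_eq a⟩

lemma LowUni.mul {d : ℕ} {n m : Matrix (Fin d) (Fin d) ℂ} (hn : LowUni n) (hm : LowUni m) :
    LowUni (n * m) := by
  constructor
  · intro a b hab
    rw [Matrix.mul_apply]
    refine Finset.sum_eq_zero fun c _ => ?_
    rcases lt_or_ge a c with h | h
    · rw [hn.1 a c h, zero_mul]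
    · rw [hm.1 c b (lt_of_le_of_lt h hab), mul_zero]
  · intro a
    rw [Matrix.mul_apply, Finset.sum_eq_single a]
    · rw [hn.2, hm.2, one_mul]
    · intro c _ hc
      rcases lt_or_gt_of_ne hc with h | h
      · rw [hm.1 c a h, mul_zero]
      · rw [hn.1 a c h, zero_mul]
    · simp

/-- The vectors of the range of `P` orthogonal to the lower unipotent translates of the
projections of basis vectors of content `lam`. -/
def ZZ (d k : ℕ) (lam : ℕ → ℕ) (P : Matrix (Ix d k) (Ix d k) ℂ) : Submodule ℂ (Ix d k → ℂ) where
  carrier := {z | P *ᵥ z = z ∧ ∀ n, LowUni n → ∀ x, IsLam lam x →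
    star z ⬝ᵥ (tensorPow d k n *ᵥ (P *ᵥ Pi.single x 1)) = 0}
  add_mem' := by
    rintro a b ⟨ha, ha'⟩ ⟨hb, hb'⟩
    refine ⟨by rw [Matrix.mulVec_add, ha, hb], fun n hn x hx => ?_⟩
    rw [star_add, add_dotProduct, ha' n hn x hx, hb' n hn x hx, add_zero]
  zero_mem' := by simp
  smul_mem' := by
    rintro c a ⟨ha, ha'⟩
    refine ⟨by rw [Matrix.mulVec_smul, ha], fun n hn x hx => ?_⟩
    rw [star_smul, smul_dotProduct, ha' n hn x hx, smul_zero]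

lemma ZZ_tensorPow {d k : ℕ} {lam : ℕ → ℕ} {P : Matrix (Ix d k) (Ix d k) ℂ}
    (hcT : ∀ g, P * tensorPow d k g = tensorPow d k g * P)
    {n : Matrix (Fin d) (Fin d) ℂ} (hn : LowUni n) {z : Ix d k → ℂ} (hz : z ∈ ZZ d k lam P) :
    tensorPow d k nᴴ *ᵥ z ∈ ZZ d k lam P := by
  obtain ⟨h1, h2⟩ := hz
  refine ⟨?_, fun m hm x hx => ?_⟩
  · rw [Matrix.mulVec_mulVec, hcT, ← Matrix.mulVec_mulVec, h1]
  · rw [← tensorPow_conjTranspose, ← star_dot_mulVec, Matrix.mulVec_mulVec, ← tensorPow_mul]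
    exact h2 _ (hn.mul hm) x hx

lemma isLam_comp {d k : ℕ} {lam : ℕ → ℕ} {x : Ix d k} (hx : IsLam lam x)
    (π : Equiv.Perm (Fin k)) : IsLam lam (x ∘ π) := by
  intro a
  rw [← hx a]
  apply Finset.card_bij (fun j _ => π j)
  · intro j hj; simpa using hj
  · intro _ _ _ _ hab; simpa using hab
  · intro b hb
    exact ⟨π.symm b, by simpa using hb, by simp⟩

lemma permMat_single {d k : ℕ} (π : Equiv.Perm (Fin k)) (x : Ix d k) :
    permMat d k π *ᵥ Pi.single x 1 = Pi.single (x ∘ ⇑π⁻¹) 1 := by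
  ext v
  rw [permMat_mulVec]
  simp only [Pi.single_apply]
  have : (v ∘ π = x) ↔ (v = x ∘ ⇑π⁻¹) := by
    constructor
    · rintro rfl; ext j; simp
    · rintro rfl; ext j; simp
  simp [this]

lemma ZZ_permMat {d k : ℕ} {lam : ℕ → ℕ} {P : Matrix (Ix d k) (Ix d k) ℂ}
    (hcS : ∀ π, P * permMat d k π = permMat d k π * P)
    (π : Equiv.Perm (Fin k)) {z : Ix d k → ℂ} (hz : z ∈ ZZ d k lam P) :
    permMat d k π *ᵥ z ∈ ZZ d k lam P := by
  obtain ⟨h1, h2⟩ := hz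
  refine ⟨?_, fun m hm x hx => ?_⟩
  · rw [Matrix.mulVec_mulVec, hcS, ← Matrix.mulVec_mulVec, h1]
  · have := permMat_conjTranspose (d := d) (π⁻¹)
    rw [inv_inv] at this
    rw [← this, ← star_dot_mulVec, Matrix.mulVec_mulVec, ← tensorPow_permMat,
      ← Matrix.mulVec_mulVec, Matrix.mulVec_mulVec _ (permMat d k π⁻¹), ← hcS,
      ← Matrix.mulVec_mulVec, permMat_single]
    exact h2 m hm _ (isLam_comp hx _)

lemma dot_tensor_single {d k : ℕ} (z : Ix d k → ℂ) (g : Matrix (Fin d) (Fin d) ℂ) (x : Ix d k) :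
    star z ⬝ᵥ (tensorPow d k g *ᵥ Pi.single x 1) = ∑ y, star (z y) * ∏ j, g (y j) (x j) := by
  simp [dotProduct, tensorPow]

lemma ZZ_upper {d k : ℕ} {lam : ℕ → ℕ} (hsupp : ∀ i, d ≤ i → lam i = 0)
    {P : Matrix (Ix d k) (Ix d k) ℂ}
    (hPherm : P.IsHermitian)
    (hdomP : ∀ y, P *ᵥ Pi.single y 1 ≠ 0 → ∀ i, #{j | (y j : ℕ) < i} ≤ ∑ a ∈ range i, lam a)
    {z : Ix d k → ℂ} (hz : z ∈ ZZ d k lam P) {x : Ix d k} (hx : IsLam lam x)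
    {g : Matrix (Fin d) (Fin d) ℂ} (hg : ∀ a b, b < a → g a b = 0) :
    star z ⬝ᵥ (tensorPow d k g *ᵥ Pi.single x 1) = 0 := by
  obtain ⟨h1, h2⟩ := hz
  rw [dot_tensor_single]
  refine Finset.sum_eq_zero fun y _ => ?_
  have hzy : star (z y) = star z ⬝ᵥ (P *ᵥ Pi.single y 1) := by
    rw [star_dot_mulVec, hPherm.eq, h1]
    simp
  by_cases hle : ∀ j, y j ≤ x j
  · by_cases hP : P *ᵥ Pi.single y 1 = 0
    · rw [hzy, hP]; simp
    · have hyx : y = x := by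
        apply eq_of_le_of_dom hle
        intro i
        rw [isLam_card_lt hsupp hx]
        exact hdomP y hP i
      have h3 := h2 1 LowUni.one x hx
      rw [tensorPow_one, Matrix.one_mulVec] at h3
      rw [hzy, hyx, h3, zero_mul]
  · push Not at hle
    obtain ⟨j, hj⟩ := hle
    rw [Finset.prod_eq_zero (Finset.mem_univ j) (hg _ _ hj), mul_zero]

lemma ZZ_all {d k : ℕ} {lam : ℕ → ℕ} (hsupp : ∀ i, d ≤ i → lam i = 0)
    {P : Matrix (Ix d k) (Ix d k) ℂ}
    (hPherm : P.IsHermitian)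
    (hcT : ∀ g, P * tensorPow d k g = tensorPow d k g * P)
    (hdomP : ∀ y, P *ᵥ Pi.single y 1 ≠ 0 → ∀ i, #{j | (y j : ℕ) < i} ≤ ∑ a ∈ range i, lam a)
    {x : Ix d k} (hx : IsLam lam x) (m : ℕ) :
    ∀ z ∈ ZZ d k lam P, ∀ g : Matrix (Fin d) (Fin d) ℂ,
      (∀ a b : Fin d, b < a → (b : ℕ) < d - m → g a b = 0) →
      star z ⬝ᵥ (tensorPow d k g *ᵥ Pi.single x 1) = 0 := by
  induction m with
  | zero =>
    intro z hz g hg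
    exact ZZ_upper hsupp hPherm hdomP hz hx (fun a b h => hg a b h (by omega))
  | succ m ih =>
    intro z hz g hg
    by_cases hm : m < d
    swap
    · exact ih z hz g (fun a b h h' => by omega)
    let c : Fin d := ⟨d - (m + 1), by omega⟩
    have main : ∀ g : Matrix (Fin d) (Fin d) ℂ,
      (∀ a b : Fin d, b < a → (b : ℕ) < d - (m + 1) → g a b = 0) → g c c ≠ 0 →
      star z ⬝ᵥ (tensorPow d k g *ᵥ Pi.single x 1) = 0 := by
      intro g hg hc
      let n : Matrix (Fin d) (Fin d) ℂ := Matrix.of fun a b =>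
        (if a = b then 1 else 0) + (if b = c then (if c < a then g a c / g c c else 0) else 0)
      let h : Matrix (Fin d) (Fin d) ℂ := Matrix.of fun a b =>
        g a b - (if c < a then g a c / g c c else 0) * g c b
      have hn : LowUni n := by
        constructor
        · intro a b hab
          simp only [n, Matrix.of_apply, hab.ne, if_false, zero_add]
          split_ifs with h1 h2
          · subst h1; exact absurd hab (not_lt.2 h2.le)
          · rfl
          · rfl
        · intro a
          simp only [n, Matrix.of_apply, if_true]
          split_ifs with h1 h2
          · subst h1; exact absurd h2 (lt_irrefl _)
          · simp
          · simp
      have hgn : g = n * h := by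
        ext a b
        rw [Matrix.mul_apply]
        simp only [n, h, Matrix.of_apply, add_mul, Finset.sum_add_distrib, ite_mul, one_mul,
          zero_mul, Finset.sum_ite_eq, Finset.mem_univ, if_true, Finset.sum_ite_eq', lt_irrefl,
          if_false, sub_zero]
        split_ifs <;> ring
      rw [hgn, tensorPow_mul, ← Matrix.mulVec_mulVec, star_dot_mulVec, tensorPow_conjTranspose]
      apply ih _ (ZZ_tensorPow hcT hn hz)
      intro a b hab hb
      simp only [h, Matrix.of_apply]
      rcases Nat.lt_or_ge (b : ℕ) (d - (m + 1)) with h1 | h1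
      · rw [hg a b hab h1, hg c b h1 h1]; simp
      · have hbc : b = c := Fin.ext (by simp only [c]; omega)
        subst hbc
        rw [if_pos hab]
        field_simp
        simp
    have hcont : Continuous fun s : ℂ =>
        star z ⬝ᵥ (tensorPow d k (g + s • Matrix.single c c 1) *ᵥ Pi.single x 1) := by
      simp only [dot_tensor_single, Matrix.add_apply, Matrix.smul_apply]
      fun_prop
    have hzero : (fun s : ℂ =>
        star z ⬝ᵥ (tensorPow d k (g + s • Matrix.single c c 1) *ᵥ Pi.single x 1))
        = fun _ => 0 := by
      refine Continuous.ext_on (dense_compl_singleton (-g c c)) hcont continuous_const ?_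
      intro s hs
      apply main
      · intro a b hab hb
        have : b ≠ c := fun h => by
          have := congrArg Fin.val h
          simp only [c] at this
          omega
        simp [hg a b hab hb, this.symm]
      · simp only [Matrix.add_apply, Matrix.smul_apply, Matrix.single_apply_same, smul_eq_mul,
          mul_one]
        intro h
        apply hs
        simp only [Set.mem_singleton_iff]
        linear_combination h
    have := congrFun hzero 0
    simpa using this

lemma rowSym_eq_zero {d k : ℕ} (x : Ix d k) (z : Ix d k → ℂ)
    (hsym : ∀ π : Equiv.Perm (Fin k), x ∘ π = x → ∀ y, z (y ∘ π) = z y)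
    (h : ∀ g : Matrix (Fin d) (Fin d) ℂ,
      star z ⬝ᵥ (tensorPow d k g *ᵥ Pi.single x 1) = 0) : z = 0 := by
  let mon : Ix d k → (Fin d × Fin d →₀ ℕ) := fun y => ∑ j, Finsupp.single (y j, x j) 1
  let Q : MvPolynomial (Fin d × Fin d) ℂ := ∑ y, MvPolynomial.monomial (mon y) (star (z y))
  have hQ : Q = 0 := by
    apply MvPolynomial.funext
    intro G
    have := h (Matrix.of fun a b => G (a, b))
    rw [dot_tensor_single] at this
    simp only [Q, map_sum, map_zero]
    rw [← this]
    refine Finset.sum_congr rfl fun y _ => ?_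
    have e : MvPolynomial.monomial (mon y) (star (z y)) =
        MvPolynomial.C (star (z y)) * ∏ j, MvPolynomial.X (y j, x j) := by
      simp only [MvPolynomial.X]
      rw [← MvPolynomial.monomial_sum_one, MvPolynomial.C_mul_monomial, mul_one]
    rw [e]
    simp
  have hmon : ∀ y p, mon y p = #{j | (y j, x j) = p} := by
    intro y p
    simp only [mon, Finsupp.finsetSum_apply, Finsupp.single_apply]
    simp
  funext y
  have hc : MvPolynomial.coeff (mon y) Q = 0 := by rw [hQ]; simp
  simp only [Q, MvPolynomial.coeff_sum, MvPolynomial.coeff_monomial] at hc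
  have hall : ∀ y', mon y' = mon y → z y' = z y := by
    intro y' hy'
    have e : ∀ p, Nonempty ({j // (y' j, x j) = p} ≃ {j // (y j, x j) = p}) := by
      intro p
      apply Fintype.card_eq.1
      rw [Fintype.card_subtype, Fintype.card_subtype, ← hmon, ← hmon, hy']
    let π : Equiv.Perm (Fin k) := Equiv.ofFiberEquiv (fun p => (e p).some)
    have hπ : ∀ j, (y (π j), x (π j)) = (y' j, x j) := fun j =>
      Equiv.ofFiberEquiv_map (f := fun j => (y' j, x j)) (g := fun j => (y j, x j))
        (fun p => (e p).some) j
    rw [← hsym π (funext fun j => (Prod.ext_iff.1 (hπ j)).2) y]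
    congr 1
    funext j
    exact (Prod.ext_iff.1 (hπ j)).1.symm
  rw [← Finset.sum_filter, Finset.sum_congr rfl (g := fun _ => star (z y))] at hc
  · rw [Finset.sum_const, nsmul_eq_mul, _root_.mul_eq_zero] at hc
    rcases hc with hc | hc
    · exfalso
      rw [Nat.cast_eq_zero, Finset.card_eq_zero] at hc
      have : y ∈ ({a | mon a = mon y} : Finset (Ix d k)) := by simp
      rw [hc] at this
      simp at this
    · simpa using hc
  · intro y' hy'
    rw [hall y' (by simpa using hy')]

lemma ZZ_eq_zero {d k : ℕ} {lam : ℕ → ℕ} (hsupp : ∀ i, d ≤ i → lam i = 0)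
    (hsum : ∑ i ∈ range d, lam i = k)
    {P : Matrix (Ix d k) (Ix d k) ℂ}
    (hPherm : P.IsHermitian)
    (hPrange : LinearMap.range P.mulVecLin = isotypic d k lam)
    (hcT : ∀ g, P * tensorPow d k g = tensorPow d k g * P)
    (hcS : ∀ π, P * permMat d k π = permMat d k π * P)
    (hdomP : ∀ y, P *ᵥ Pi.single y 1 ≠ 0 → ∀ i, #{j | (y j : ℕ) < i} ≤ ∑ a ∈ range i, lam a)
    {z : Ix d k → ℂ} (hz : z ∈ ZZ d k lam P) : z = 0 := by
  have hzW : z ∈ isotypic d k lam := by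
    rw [← hPrange]
    exact ⟨z, hz.1⟩
  have key : ∀ w ∈ isotypic d k lam, star z ⬝ᵥ w = 0 := by
    intro w hw
    unfold isotypic at hw
    induction hw using Submodule.span_induction with
    | mem x hx =>
      obtain ⟨t, ht, π, v, rfl⟩ := hx
      unfold youngSymMat
      rw [← Matrix.mulVec_mulVec, star_dot_mulVec, star_dot_mulVec, star_dot_mulVec,
        permMat_conjTranspose]
      have hz1 : (∑ π ∈ univ.filter (fun π : Equiv.Perm (Fin k) => ∀ j, (t (π j)).2 = (t j).2),
          (((Equiv.Perm.sign π : ℤ) : ℂ) • permMat d k π))ᴴ *ᵥ (permMat d k π⁻¹ *ᵥ z)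
            ∈ ZZ d k lam P := by
        rw [Matrix.conjTranspose_sum, Matrix.sum_mulVec]
        refine Submodule.sum_mem _ fun σ _ => ?_
        rw [Matrix.conjTranspose_smul, permMat_conjTranspose, Matrix.smul_mulVec]
        exact Submodule.smul_mem _ _ (ZZ_permMat hcS _ (ZZ_permMat hcS _ hz))
      set z1 := (∑ π ∈ univ.filter (fun π : Equiv.Perm (Fin k) => ∀ j, (t (π j)).2 = (t j).2),
          (((Equiv.Perm.sign π : ℤ) : ℂ) • permMat d k π))ᴴ *ᵥ (permMat d k π⁻¹ *ᵥ z)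
      have hz2 : (∑ π ∈ univ.filter (fun π : Equiv.Perm (Fin k) => ∀ j, (t (π j)).1 = (t j).1),
          permMat d k π)ᴴ *ᵥ z1 ∈ ZZ d k lam P := by
        rw [Matrix.conjTranspose_sum, Matrix.sum_mulVec]
        refine Submodule.sum_mem _ fun σ _ => ?_
        rw [permMat_conjTranspose]
        exact ZZ_permMat hcS _ hz1
      have hlt : ∀ j, (t j).1 < d := by
        intro j
        have h1 := ht.mapsTo (Set.mem_univ j)
        simp only [youngCells, Finset.coe_filter, Set.mem_ofPred_eq, Finset.mem_product,
          Finset.mem_range] at h1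
        exact h1.1.1
      let x0 : Ix d k := fun j => ⟨(t j).1, hlt j⟩
      have hx0 : IsLam lam x0 := by
        intro a
        rw [← card_row hsupp hsum ht a]
        congr 1
        ext j
        simp [x0, Fin.ext_iff]
      have hz3 : (∑ π ∈ univ.filter (fun π : Equiv.Perm (Fin k) => ∀ j, (t (π j)).1 = (t j).1),
          permMat d k π)ᴴ *ᵥ z1 = 0 := by
        apply rowSym_eq_zero x0
        · intro τ hτ y
          have hτ' : ∀ j, (t (τ j)).1 = (t j).1 := fun j => by
            have := congrFun hτ j
            simpa [x0, Fin.ext_iff] using this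
          have hτ'' : ∀ j, (t (τ⁻¹ j)).1 = (t j).1 := fun j => by
            rw [← hτ' (τ⁻¹ j)]; simp
          simp only [Matrix.conjTranspose_sum, Matrix.sum_mulVec, permMat_conjTranspose,
            Finset.sum_apply, permMat_mulVec]
          apply Finset.sum_bij' (fun π _ => π * τ⁻¹) (fun π _ => π * τ)
          · intro π hπ
            simp only [Finset.mem_filter, Finset.mem_univ, true_and, Equiv.Perm.mul_apply] at hπ ⊢
            intro j
            rw [hπ, hτ'']
          · intro π hπ
            simp only [Finset.mem_filter, Finset.mem_univ, true_and, Equiv.Perm.mul_apply] at hπ ⊢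
            intro j
            rw [hπ, hτ']
          · intro π _; simp
          · intro π _; simp
          · intro π _
            congr 1
        · intro g
          exact ZZ_all hsupp hPherm hcT hdomP hx0 d _ hz2 g (fun a b _ h => by omega)
      rw [hz3]
      simp
    | zero => simp
    | add x y _ _ hx hy => simp [dotProduct_add, hx, hy]
    | smul c x _ hx => simp [dotProduct_smul, hx]
  have := key z hzW
  rwa [dotProduct_star_self_eq_zero] at this

/-! ### Dimension bound -/

/-- Index set of strictly lower triangular entries. -/
abbrev LowPairs (d : ℕ) := {p : Fin d × Fin d // p.2 < p.1}

lemma card_lowPairs (d : ℕ) : Fintype.card (LowPairs d) = d * (d - 1) / 2 := by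
  rw [Fintype.card_subtype, ← Finset.sum_range_id,
    Finset.card_eq_sum_card_fiberwise (f := Prod.fst) (t := univ) (by simp), Finset.sum_range]
  refine Finset.sum_congr rfl fun a _ => ?_
  rw [← Fin.card_Iio a]
  apply Finset.card_bij (fun p _ => p.2)
  · rintro ⟨b, c⟩ h
    simp only [Finset.mem_filter, Finset.mem_univ, true_and, Finset.mem_Iio] at h ⊢
    rw [← h.2]; exact h.1
  · rintro ⟨b, c⟩ h ⟨b', c'⟩ h' e
    simp only [Finset.mem_filter, Finset.mem_univ, true_and] at h h' e
    rw [e, h.2, h'.2]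
  · intro b hb
    exact ⟨(a, b), by simpa using hb, rfl⟩

/-- Coefficient matrices of `tensorPow` on lower unipotent matrices. -/
def coefMat (d k : ℕ) (α : LowPairs d → Fin (k + 1)) : Matrix (Ix d k) (Ix d k) ℂ :=
  Matrix.of fun y x => if (∀ j, x j ≤ y j) ∧ ∀ p : LowPairs d, #{j | (y j, x j) = p.1} = (α p : ℕ)
    then 1 else 0

lemma tensorPow_lowUni {d k : ℕ} {n : Matrix (Fin d) (Fin d) ℂ} (hn : LowUni n) :
    tensorPow d k n = ∑ α : LowPairs d → Fin (k + 1),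
      (∏ p : LowPairs d, n p.1.1 p.1.2 ^ (α p : ℕ)) • coefMat d k α := by
  ext y x
  simp only [tensorPow, Matrix.of_apply, Matrix.sum_apply, Matrix.smul_apply, coefMat, smul_eq_mul]
  by_cases hle : ∀ j, x j ≤ y j
  · let α0 : LowPairs d → Fin (k + 1) := fun p => ⟨#{j | (y j, x j) = p.1}, by
      have := Finset.card_le_univ ({j | (y j, x j) = p.1} : Finset (Fin k))
      rw [Fintype.card_fin] at this
      omega⟩
    rw [Finset.sum_eq_single α0]
    · rw [if_pos ⟨hle, fun p => rfl⟩, mul_one]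
      have h1 : ∀ p : LowPairs d, n p.1.1 p.1.2 ^ (α0 p : ℕ) =
          ∏ j, if (y j, x j) = p.1 then n p.1.1 p.1.2 else 1 := by
        intro p
        rw [← Finset.prod_filter, Finset.prod_const]
      simp only [h1]
      rw [Finset.prod_comm]
      refine Finset.prod_congr rfl fun j _ => ?_
      rcases eq_or_lt_of_le (hle j) with h | h
      · rw [h, hn.2, Finset.prod_eq_one]
        intro p _
        rw [if_neg]
        intro e
        have := p.2
        rw [← e] at this
        exact lt_irrefl _ this
      · rw [Finset.prod_eq_single (⟨(y j, x j), h⟩ : LowPairs d)]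
        · simp
        · intro p _ hp
          rw [if_neg]
          intro e
          exact hp (Subtype.ext e.symm)
        · simp
    · intro α _ hα
      rw [if_neg, mul_zero]
      rintro ⟨_, h⟩
      apply hα
      funext p
      exact Fin.ext (h p).symm
    · simp
  · rw [Finset.sum_eq_zero]
    · push Not at hle
      obtain ⟨j, hj⟩ := hle
      exact Finset.prod_eq_zero (Finset.mem_univ j) (hn.1 _ _ hj)
    · intro α _
      rw [if_neg (fun h => hle h.1), mul_zero]

open Classical in
lemma finrank_isotypic_le {d k : ℕ} {lam : ℕ → ℕ} (hsupp : ∀ i, d ≤ i → lam i = 0)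
    (hsum : ∑ i ∈ range d, lam i = k)
    {P : Matrix (Ix d k) (Ix d k) ℂ} (hPidem : P * P = P)
    (hPherm : P.IsHermitian)
    (hPrange : LinearMap.range P.mulVecLin = isotypic d k lam)
    (hcT : ∀ g, P * tensorPow d k g = tensorPow d k g * P)
    (hcS : ∀ π, P * permMat d k π = permMat d k π * P)
    (hdomP : ∀ y, P *ᵥ Pi.single y 1 ≠ 0 → ∀ i, #{j | (y j : ℕ) < i} ≤ ∑ a ∈ range i, lam a) :
    Module.finrank ℂ (LinearMap.range P.mulVecLin) ≤
      (k + 1) ^ (d * (d - 1) / 2) * #{x : Ix d k | IsLam lam x} := by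
  let J := (LowPairs d → Fin (k + 1)) × {x : Ix d k // IsLam lam x}
  let L : (Ix d k → ℂ) →ₗ[ℂ] (J → ℂ) :=
    Matrix.mulVecLin (Matrix.of fun (q : J) (y : Ix d k) =>
      star ((coefMat d k q.1 *ᵥ (P *ᵥ Pi.single q.2.1 1)) y))
  have hL : ∀ z q, L z q = star (coefMat d k q.1 *ᵥ (P *ᵥ Pi.single q.2.1 1)) ⬝ᵥ z :=
    fun z q => rfl
  have hinj : Function.Injective (L.domRestrict (LinearMap.range P.mulVecLin)) := by
    rw [← LinearMap.ker_eq_bot, LinearMap.ker_eq_bot']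
    rintro ⟨z, u, hu⟩ h0
    have hPz : P *ᵥ z = z := by
      rw [← hu, Matrix.mulVecLin_apply, Matrix.mulVec_mulVec, hPidem]
    apply Subtype.ext
    refine ZZ_eq_zero hsupp hsum hPherm hPrange hcT hcS hdomP (z := z) ⟨hPz, ?_⟩
    intro n hn x hx
    rw [tensorPow_lowUni hn, Matrix.sum_mulVec, dotProduct_sum]
    refine Finset.sum_eq_zero fun α _ => ?_
    rw [Matrix.smul_mulVec, dotProduct_smul]
    have h1 : L z (α, ⟨x, hx⟩) = 0 := congrFun h0 _
    rw [hL] at h1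
    have h2 := congrArg star h1
    rw [star_dotProduct, star_star, star_zero] at h2
    rw [h2, smul_zero]
  have h := LinearMap.finrank_le_finrank_of_injective hinj
  rw [Module.finrank_fintype_fun_eq_card] at h
  refine h.trans (le_of_eq ?_)
  simp only [J, Fintype.card_prod, Fintype.card_fun, Fintype.card_fin, card_lowPairs]
  rw [Fintype.card_subtype]

lemma isLam_prod {d k : ℕ} {lam : ℕ → ℕ} {x : Ix d k} (hx : IsLam lam x) (f : Fin d → ℝ) :
    ∏ j, f (x j) = ∏ i : Fin d, f i ^ lam i := by
  rw [← Finset.prod_fiberwise (s := univ) (g := x)]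
  refine Finset.prod_congr rfl fun i _ => ?_
  rw [← hx i, ← Finset.prod_const]
  refine Finset.prod_congr rfl fun j hj => ?_
  rw [(Finset.mem_filter.1 hj).2]

lemma proj_diag {I : Type*} [Fintype I] [DecidableEq I] {P : Matrix I I ℂ}
    (hPidem : P * P = P) (hPherm : P.IsHermitian) (y : I) :
    P y y = ((∑ x, ‖P x y‖ ^ 2 : ℝ) : ℂ) := by
  conv_lhs => rw [← hPidem, Matrix.mul_apply]
  push_cast
  refine Finset.sum_congr rfl fun x _ => ?_
  rw [← hPherm.apply y x, ← Complex.conj_mul']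
  rfl

lemma trace_conj {d k : ℕ} {P : Matrix (Ix d k) (Ix d k) ℂ}
    (hcT : ∀ g, P * tensorPow d k g = tensorPow d k g * P)
    (S D S' : Matrix (Fin d) (Fin d) ℂ) (hS : S' * S = 1) :
    (P * tensorPow d k (S * D * S')).trace = (P * tensorPow d k D).trace := by
  rw [tensorPow_mul, ← Matrix.mul_assoc, Matrix.trace_mul_comm, tensorPow_mul, ← Matrix.mul_assoc P,
    hcT, Matrix.mul_assoc, ← Matrix.mul_assoc, ← tensorPow_mul, hS, tensorPow_one, Matrix.one_mul]

lemma exists_diag {d : ℕ} (ρ : Matrix (Fin d) (Fin d) ℂ) (hρ : ρ.IsHermitian)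
    (r : Fin d → ℝ) (σ : Equiv.Perm (Fin d)) (hσ : ∀ i, r i = hρ.eigenvalues (σ i)) :
    ∃ S S' : Matrix (Fin d) (Fin d) ℂ, S' * S = 1 ∧
      ρ = S * diagonal (fun i => (r i : ℂ)) * S' := by
  let U : Matrix (Fin d) (Fin d) ℂ := hρ.eigenvectorUnitary
  have hU : star U * U = 1 := Unitary.coe_star_mul_self hρ.eigenvectorUnitary
  let A : Matrix (Fin d) (Fin d) ℂ := Matrix.of fun a b => if a = σ b then 1 else 0
  let B : Matrix (Fin d) (Fin d) ℂ := Matrix.of fun a b => if σ a = b then 1 else 0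
  have hBA : B * A = 1 := by
    ext a b
    simp [A, B, Matrix.mul_apply, Matrix.one_apply]
  have hD : diagonal (fun i => (hρ.eigenvalues i : ℂ)) =
      A * diagonal (fun i => (r i : ℂ)) * B := by
    ext a b
    rw [Matrix.mul_apply]
    simp only [Matrix.mul_diagonal, A, B, Matrix.of_apply]
    rw [Finset.sum_eq_single (σ.symm a)]
    · simp [Matrix.diagonal_apply, hσ]
    · intro c _ hc
      rw [if_neg]
      · simp
      · rintro rfl; simp at hc
    · simp
  refine ⟨U * A, B * star U, ?_, ?_⟩
  · rw [Matrix.mul_assoc, ← Matrix.mul_assoc (star U), hU, Matrix.one_mul, hBA]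
  · have h := hρ.spectral_theorem
    rw [Unitary.conjStarAlgAut_apply] at h
    have hD' : diagonal (RCLike.ofReal ∘ hρ.eigenvalues) =
      A * diagonal (fun i => (r i : ℂ)) * B := hD
    rw [hD'] at h
    conv_lhs => rw [h]
    simp only [Matrix.mul_assoc, U]

open Classical in
lemma count_bound {d k : ℕ} (hk : 0 < k) {lam : ℕ → ℕ}
    (hsum : ∑ i ∈ range d, lam i = k) :
    (#{x : Ix d k | IsLam lam x} : ℝ) * ∏ i : Fin d, ((lam i : ℝ) / k) ^ lam i ≤ 1 := by
  have h1 : ∑ i : Fin d, ((lam i : ℝ) / k) = 1 := by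
    rw [← Finset.sum_div, ← Finset.sum_range (fun i => (lam i : ℝ)), ← Nat.cast_sum, hsum]
    field_simp
  have h2 : ∑ x : Ix d k, ∏ j, ((lam (x j) : ℝ) / k) = 1 := by
    have := Finset.prod_univ_sum (fun _ : Fin k => (univ : Finset (Fin d)))
      (fun _ i => ((lam i : ℝ) / k))
    rw [h1] at this
    simpa using this.symm
  rw [← h2, ← nsmul_eq_mul, ← Finset.sum_const]
  refine le_trans (le_of_eq ?_) (Finset.sum_le_sum_of_subset_of_nonneg
    (Finset.subset_univ ({x : Ix d k | IsLam lam x} : Finset (Ix d k))) ?_)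
  · refine Finset.sum_congr rfl fun x hx => ?_
    have hx' : IsLam lam x := by simpa using hx
    exact (isLam_prod hx' (fun i => (lam i : ℝ) / k)).symm
  · intro x _ _
    exact Finset.prod_nonneg fun j _ => by positivity

lemma exists_isLam {d k : ℕ} {lam : ℕ → ℕ} (hsum : ∑ i ∈ range d, lam i = k) :
    ∃ x : Ix d k, IsLam lam x := by
  have hc : Fintype.card (Fin k) = Fintype.card (Σ i : Fin d, Fin (lam i)) := by
    simp [← hsum, Finset.sum_range]
  let e : Fin k ≃ Σ i : Fin d, Fin (lam i) := Fintype.equivOfCardEq hc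
  refine ⟨fun j => (e j).1, fun a => ?_⟩
  conv_rhs => rw [← Fintype.card_fin (lam a), ← Finset.card_univ]
  symm
  apply Finset.card_bij (fun c _ => e.symm ⟨a, c⟩)
  · intro c _; simp
  · intro c _ c' _ h
    simpa using h
  · intro j hj
    simp only [Finset.mem_filter, Finset.mem_univ, true_and] at hj
    subst hj
    exact ⟨(e j).2, by simp, by simp⟩

/-- Keyl–Werner estimate: if `ρ` is a density operator on `ℂ^d` with (ordered) eigenvalue
vector `r`, `lam` a partition of `k` with at most `d` parts, and `P` the orthogonal projection
onto the `lam`-isotypic component of `(ℂ^d)^{⊗k}`, then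
`tr(P ρ^{⊗k}) ≤ (k+1)^{d(d−1)/2} exp(−k·D(lam/k ‖ r))`. -/
theorem stmt_8 {d k : ℕ} (hk : 0 < k)
    (ρ : Matrix (Fin d) (Fin d) ℂ) (hρ : ρ.PosSemidef) (hρtr : ρ.trace = 1)
    (r : Fin d → ℝ) (hr_anti : Antitone r)
    (hr_spec : ∃ σ : Equiv.Perm (Fin d), ∀ i, r i = hρ.1.eigenvalues (σ i))
    (lam : ℕ → ℕ) (hanti : Antitone lam) (hsupp : ∀ i, d ≤ i → lam i = 0)
    (hsum : ∑ i ∈ range d, lam i = k)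
    (P : Matrix (Fin k → Fin d) (Fin k → Fin d) ℂ)
    (hPidem : P * P = P) (hPherm : P.IsHermitian)
    (hPrange : LinearMap.range P.mulVecLin = isotypic d k lam) :
    (P * tensorPow d k ρ).trace.re ≤
      (k + 1) ^ (d * (d - 1) / 2) *
        Real.exp (-(k : ℝ) * ∑ i : Fin d, (if lam i = 0 then 0 else
          ((lam i : ℝ) / k) * (Real.log ((lam i : ℝ) / k) - Real.log (r i)))) := by
  classical
  obtain ⟨σ, hσ⟩ := hr_spec
  have hr0 : ∀ i, 0 ≤ r i := fun i => by
    rw [hσ i]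
    exact hρ.eigenvalues_nonneg _
  have hcT : ∀ g, P * tensorPow d k g = tensorPow d k g * P := by
    intro g
    apply proj_commute P hPidem hPherm
    · rw [hPrange]
      exact fun w hw => isotypic_tensorPow g hw
    · rw [hPrange, tensorPow_conjTranspose]
      exact fun w hw => isotypic_tensorPow _ hw
  have hcS : ∀ π, P * permMat d k π = permMat d k π * P := by
    intro g
    apply proj_commute P hPidem hPherm
    · rw [hPrange]
      exact fun w hw => isotypic_permMat g hw
    · rw [hPrange, permMat_conjTranspose]
      exact fun w hw => isotypic_permMat _ hw
  have hq := proj_diag hPidem hPherm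
  set q : (Fin k → Fin d) → ℝ := fun y => ∑ x, ‖P x y‖ ^ 2 with hqdef
  have hq0 : ∀ y, 0 ≤ q y := fun y => Finset.sum_nonneg fun x _ => by positivity
  have hdomq : ∀ y, q y ≠ 0 → ∀ i, #{j | (y j : ℕ) < i} ≤ ∑ a ∈ range i, lam a := by
    intro y hy i
    have hmem : P *ᵥ Pi.single y 1 ∈ isotypic d k lam := by
      rw [← hPrange]
      exact ⟨Pi.single y 1, rfl⟩
    apply isotypic_dom hanti hsupp hsum hmem y
    simp only [Matrix.mulVec_single_one, Matrix.col_apply]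
    rw [hq y]
    exact_mod_cast hy
  have hdomP : ∀ y, P *ᵥ Pi.single y 1 ≠ 0 →
      ∀ i, #{j | (y j : ℕ) < i} ≤ ∑ a ∈ range i, lam a := by
    intro y hy
    apply hdomq
    intro h
    apply hy
    rw [hqdef] at h
    simp only at h
    rw [Finset.sum_eq_zero_iff_of_nonneg (fun x _ => by positivity)] at h
    ext x
    have := h x (Finset.mem_univ x)
    simpa using this
  have hrank := finrank_isotypic_le hsupp hsum hPidem hPherm hPrange hcT hcS hdomP
  have htr : ∑ y, q y = Module.finrank ℂ (LinearMap.range P.mulVecLin) := by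
    have hproj : LinearMap.IsProj (LinearMap.range P.mulVecLin) P.mulVecLin := by
      constructor
      · intro x; exact ⟨x, rfl⟩
      · rintro _ ⟨x, rfl⟩
        simp only [Matrix.mulVecLin_apply, Matrix.mulVec_mulVec, hPidem]
    have h1 := hproj.trace
    rw [← Matrix.toLin'_apply', Matrix.trace_toLin'_eq] at h1
    rw [Matrix.toLin'_apply'] at h1
    have h2 : P.trace = ((∑ y, q y : ℝ) : ℂ) := by
      rw [Complex.ofReal_sum]
      exact Finset.sum_congr rfl fun y _ => hq y
    rw [h2] at h1
    exact_mod_cast h1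
  obtain ⟨S, S', hS, hρS⟩ := exists_diag ρ hρ.1 r σ hσ
  rw [hρS, trace_conj hcT S _ S' hS]
  have hTD : tensorPow d k (diagonal fun i => (r i : ℂ)) =
      diagonal fun y => ((∏ j, r (y j) : ℝ) : ℂ) := by
    ext y x
    simp only [tensorPow, Matrix.of_apply, Matrix.diagonal_apply]
    rw [Finset.prod_ite_zero]
    simp [funext_iff]
  have htrace : (P * tensorPow d k (diagonal fun i => (r i : ℂ))).trace.re =
      ∑ y, q y * ∏ j, r (y j) := by
    rw [hTD]
    simp only [Matrix.trace, Matrix.diag_apply, Matrix.mul_diagonal, hq]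
    rw [Complex.re_sum]
    refine Finset.sum_congr rfl fun y _ => ?_
    rw [← Complex.ofReal_mul, Complex.ofReal_re]
  rw [htrace]
  obtain ⟨x0, hx0⟩ := exists_isLam hsum
  set R : ℝ := ∏ i : Fin d, r i ^ lam i with hR
  have hR0 : 0 ≤ R := Finset.prod_nonneg fun i _ => pow_nonneg (hr0 i) _
  have hle : ∑ y, q y * ∏ j, r (y j) ≤ (∑ y, q y) * R := by
    rw [Finset.sum_mul]
    refine Finset.sum_le_sum fun y _ => ?_
    by_cases hy : q y = 0
    · rw [hy, zero_mul, zero_mul]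
    · apply mul_le_mul_of_nonneg_left _ (hq0 y)
      rw [hR, ← isLam_prod hx0]
      apply prod_le_of_dom r hr_anti hr0
      intro i
      rw [isLam_card_lt hsupp hx0]
      exact hdomq y hy i
  refine hle.trans ?_
  rw [htr]
  have hrank' : (Module.finrank ℂ (LinearMap.range P.mulVecLin) : ℝ) ≤
      ((k : ℝ) + 1) ^ (d * (d - 1) / 2) * (#{x : Ix d k | IsLam lam x} : ℝ) := by
    exact_mod_cast hrank
  refine (mul_le_mul_of_nonneg_right hrank' hR0).trans ?_
  rw [mul_assoc]
  apply mul_le_mul_of_nonneg_left _ (by positivity)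
  rw [Finset.mul_sum, Real.exp_sum]
  have hterm : R ≤ (∏ i : Fin d, ((lam i : ℝ) / k) ^ lam i) *
      ∏ i : Fin d, Real.exp (-(k : ℝ) * (if lam i = 0 then 0 else
          ((lam i : ℝ) / k) * (Real.log ((lam i : ℝ) / k) - Real.log (r i)))) := by
    rw [hR, ← Finset.prod_mul_distrib]
    refine Finset.prod_le_prod (fun i _ => pow_nonneg (hr0 i) _) fun i _ => ?_
    by_cases hl : lam i = 0
    · simp [hl]
    · rw [if_neg hl]
      have hkpos : (0 : ℝ) < k := by exact_mod_cast hk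
      have hlpos : (0 : ℝ) < lam i := by exact_mod_cast Nat.pos_of_ne_zero hl
      have hp : (0 : ℝ) < (lam i : ℝ) / k := by positivity
      have e1 : ((lam i : ℝ) / k) ^ lam i = Real.exp ((lam i : ℝ) * Real.log ((lam i : ℝ) / k)) := by
        rw [Real.exp_nat_mul, Real.exp_log hp]
      have e2 : Real.exp ((lam i : ℝ) * Real.log ((lam i : ℝ) / k)) *
          Real.exp (-(k : ℝ) * (((lam i : ℝ) / k) *
            (Real.log ((lam i : ℝ) / k) - Real.log (r i)))) =
          Real.exp ((lam i : ℝ) * Real.log (r i)) := by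
        rw [← Real.exp_add]
        congr 1
        have : (k : ℝ) * ((lam i : ℝ) / k) = lam i :=
          mul_div_cancel₀ _ hkpos.ne'
        linear_combination (-(Real.log ((lam i : ℝ) / k) - Real.log (r i))) * this
      rw [e1, e2]
      rcases (hr0 i).eq_or_lt with h0 | h0
      · rw [← h0, zero_pow hl]
        exact (Real.exp_pos _).le
      · rw [Real.exp_nat_mul, Real.exp_log h0]
  refine (mul_le_mul_of_nonneg_left hterm (Nat.cast_nonneg _)).trans ?_
  rw [← mul_assoc]
  exact mul_le_of_le_one_left (Finset.prod_nonneg fun i _ => (Real.exp_pos _).le)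
    (count_bound hk hsum)

end
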